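/- (The right direction grows.) Let C₁ ≥ 200 be a fixed constant, let α ∈ (0, 0.1), suppose v_0 = v*, n = 2^L ≥ 2 is a power of two with L = log₂ n, and η ≤ 0.1 / max_{i∈[n]} ‖y_i‖₂². Then under Oja's update rule, log ‖v_n‖₂ ≥ (β/8) / (1 + C₁ · α² · L²). Moreover, if in addition α < 1/(10 · C₁ · L), then ‖v_n‖₂ ≥ exp(β/20). -/

import Mathlib

open RealInnerProductSpace

/-!
Step `i` multiplies `‖v_i‖²` by at least `1 + 2 g_i`, where `g_i = η⟨y_{i+1}, v̂_i⟩²`, so `∑ g_i` is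
bounded by a multiple of `log ‖v_n‖`. On the other hand `v_i` stays close to the line of `v*`, and
splitting `v_i` along `v*` and its orthogonal complement bounds `β` by `∑ g_i` plus the energy of
the orthogonal components. That energy is at most `α² L² ∑ g_i`, by dyadic recursion: halving a time
interval, what was accumulated in the first half is a fixed vector throughout the second, whose
energy there the hypothesis on `α` controls by the gain of the first half.
-/

section Auxiliary

variable {ι : Type*}

theorem mul_le_of_le_div_sup' {s : Finset ι} (hs : s.Nonempty) {f : ι → ℝ} {c η : ℝ} (hη : 0 < η)
    (hf : ∀ i ∈ s, 0 ≤ f i) (h : η ≤ c / s.sup' hs f) {i : ι} (hi : i ∈ s) : η * f i ≤ c := by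
  have hfi : f i ≤ s.sup' hs f := s.le_sup' f hi
  have hsup : 0 < s.sup' hs f := by
    refine ((hf i hi).trans hfi).lt_of_ne' fun hzero => ?_
    rw [hzero, div_zero] at h
    exact hη.not_ge h
  calc η * f i ≤ η * s.sup' hs f := by gcongr
    _ ≤ c := (le_div_iff₀ hsup).1 h

theorem sum_mul_add_sq_le {s : Finset ι} {c a b : ι → ℝ} {k X Y : ℝ} (hc : ∀ i ∈ s, 0 ≤ c i)
    (hk : 0 ≤ k) (hX : 0 ≤ X) (ha : ∑ i ∈ s, c i * a i ^ 2 ≤ k ^ 2 * X)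
    (hb : ∑ i ∈ s, c i * b i ^ 2 ≤ Y) :
    ∑ i ∈ s, c i * (a i + b i) ^ 2 ≤ (k + 1) * (k * X + Y) := by
  have hb_nonneg : 0 ≤ ∑ i ∈ s, c i * b i ^ 2 :=
    Finset.sum_nonneg fun i hi => mul_nonneg (hc i hi) (sq_nonneg _)
  have cauchy : (∑ i ∈ s, c i * a i * b i) ^ 2 ≤
      (∑ i ∈ s, c i * a i ^ 2) * ∑ i ∈ s, c i * b i ^ 2 :=
    Finset.sum_sq_le_sum_mul_sum_of_sq_le_mul s
      (fun i hi => mul_nonneg (hc i hi) (sq_nonneg _))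
      (fun i hi => mul_nonneg (hc i hi) (sq_nonneg _)) (fun i _ => by ring_nf; rfl)
  have cross : 2 * ∑ i ∈ s, c i * a i * b i ≤ k * (X + Y) := by
    refine le_of_sq_le_sq ?_ (mul_nonneg hk (by linarith))
    calc (2 * ∑ i ∈ s, c i * a i * b i) ^ 2 ≤ 4 * (k ^ 2 * X * Y) := by
          rw [mul_pow]
          linarith [cauchy.trans (mul_le_mul ha hb hb_nonneg (by positivity))]
      _ ≤ (k * (X + Y)) ^ 2 := by linarith [sq_nonneg (k * (X - Y))]
  calc ∑ i ∈ s, c i * (a i + b i) ^ 2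
      = ∑ i ∈ s, c i * a i ^ 2 + 2 * ∑ i ∈ s, c i * a i * b i + ∑ i ∈ s, c i * b i ^ 2 := by
        rw [Finset.mul_sum, ← Finset.sum_add_distrib, ← Finset.sum_add_distrib]
        exact Finset.sum_congr rfl fun i _ => by ring
    _ ≤ (k + 1) * (k * X + Y) := by linarith

theorem mul_sum_Ico_sq_le_of_range {η B : ℝ} (hη : 0 ≤ η) {f : ℕ → ℝ} {n t : ℕ}
    (h : η * ∑ i ∈ Finset.range n, f i ^ 2 ≤ B) (ht : t ≤ n) (s : ℕ) :
    η * ∑ i ∈ Finset.Ico s t, f i ^ 2 ≤ B := by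
  refine le_trans ?_ h
  gcongr
  intro i hi
  exact Finset.mem_range.2 ((Finset.mem_Ico.1 hi).2.trans_le ht)

variable {E : Type*} [NormedAddCommGroup E] [InnerProductSpace ℝ E]

theorem mul_sum_inner_sq_le_mul_norm_sq {K : Submodule ℝ E} {s : Finset ι} {z : ι → E} {η α : ℝ}
    (h : ∀ w ∈ K, ‖w‖ ≤ 1 → η * ∑ i ∈ s, ⟪w, z i⟫ ^ 2 ≤ α) {w : E} (hw : w ∈ K) :
    η * ∑ i ∈ s, ⟪w, z i⟫ ^ 2 ≤ α * ‖w‖ ^ 2 := by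
  rcases eq_or_ne w 0 with rfl | hw0
  · simp
  have hunit := h (‖w‖⁻¹ • w) (K.smul_mem _ hw) (norm_smul_inv_norm (𝕜 := ℝ) hw0).le
  simp only [real_inner_smul_left, mul_pow, ← Finset.mul_sum] at hunit
  have hnorm : 0 < ‖w‖ ^ 2 := by positivity
  rw [← div_le_iff₀ hnorm]
  calc _ = η * (‖w‖⁻¹ ^ 2 * ∑ i ∈ s, ⟪w, z i⟫ ^ 2) := by ring
    _ ≤ α := hunit

theorem starProjection_orthogonal_singleton_sub_self {u : E} (hu : ‖u‖ = 1) (x : E) :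
    (ℝ ∙ u)ᗮ.starProjection (x - u) = x - ⟪u, x⟫ • u := by
  rw [map_sub, Submodule.starProjection_orthogonalComplement_singleton_eq_zero, sub_zero,
    Submodule.starProjection_orthogonal_val, Submodule.starProjection_unit_singleton ℝ hu]

end Auxiliary

section Oja

variable {E : Type*} [NormedAddCommGroup E] [InnerProductSpace ℝ E]

/-- The unnormalised iterates `v_i` of Oja's rule with learning rate `η` started at `v₀`. Data is
indexed from `0`: the step from `v_i` to `v_{i+1}` uses `z i`, the paper's `y_{i+1}`. -/
def oja (η : ℝ) (z : ℕ → E) (v₀ : E) : ℕ → E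
  | 0 => v₀
  | i + 1 => oja η z v₀ i + (η * ⟪z i, oja η z v₀ i⟫) • z i

/-- The relative gain `η⟨z i, v̂_i⟩²` of step `i`, with `v̂_i` the normalised iterate. -/
noncomputable def ojaGain (η : ℝ) (z : ℕ → E) (v₀ : E) (i : ℕ) : ℝ :=
  η * ⟪z i, oja η z v₀ i⟫ ^ 2 / ‖oja η z v₀ i‖ ^ 2

/-- The energy `η⟨P (v_i - v_s), z i⟩² / ‖v_i‖²` that step `i` sees in the `K`-component accumulated
since time `s`, where `P` is the orthogonal projection onto `K`. -/
noncomputable def ojaDrift (η : ℝ) (z : ℕ → E) (v₀ : E) (K : Submodule ℝ E)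
    [K.HasOrthogonalProjection] (s i : ℕ) : ℝ :=
  η * ⟪K.starProjection (oja η z v₀ i - oja η z v₀ s), z i⟫ ^ 2 / ‖oja η z v₀ i‖ ^ 2

variable {η α : ℝ} {z : ℕ → E} {v₀ : E} {n : ℕ}

theorem eq_oja_of_recurrence {v : ℕ → E} (h0 : v 0 = v₀)
    (hv : ∀ i < n, v (i + 1) = v i + (η * ⟪z i, v i⟫) • z i) : v n = oja η z v₀ n := by
  induction n with
  | zero => exact h0
  | succ n ih => rw [hv n n.lt_succ_self, ih fun i hi => hv i (hi.trans n.lt_succ_self), oja]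

theorem inner_oja_sub_oja (w : E) {s t : ℕ} (hst : s ≤ t) :
    ⟪w, oja η z v₀ t - oja η z v₀ s⟫ =
      η * ∑ i ∈ Finset.Ico s t, ⟪z i, oja η z v₀ i⟫ * ⟪w, z i⟫ := by
  rw [← Finset.sum_Ico_sub (oja η z v₀) hst, inner_sum, Finset.mul_sum]
  refine Finset.sum_congr rfl fun i _ => ?_
  rw [oja, add_sub_cancel_left, real_inner_smul_right, mul_assoc]

theorem norm_oja_succ_sq (i : ℕ) :
    ‖oja η z v₀ (i + 1)‖ ^ 2 = ‖oja η z v₀ i‖ ^ 2 + 2 * (η * ⟪z i, oja η z v₀ i⟫ ^ 2) +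
      (η * ⟪z i, oja η z v₀ i⟫) ^ 2 * ‖z i‖ ^ 2 := by
  rw [oja, norm_add_sq_real, real_inner_smul_right, norm_smul, mul_pow, Real.norm_eq_abs, sq_abs,
    real_inner_comm]
  ring

theorem norm_oja_sq_add_le (i : ℕ) :
    ‖oja η z v₀ i‖ ^ 2 + 2 * (η * ⟪z i, oja η z v₀ i⟫ ^ 2) ≤ ‖oja η z v₀ (i + 1)‖ ^ 2 := by
  rw [norm_oja_succ_sq]
  exact le_add_of_nonneg_right (by positivity)

theorem norm_sq_add_two_mul_sum_le_norm_oja_sq (t : ℕ) :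
    ‖v₀‖ ^ 2 + 2 * (η * ∑ i ∈ Finset.range t, ⟪z i, oja η z v₀ i⟫ ^ 2) ≤ ‖oja η z v₀ t‖ ^ 2 := by
  induction t with
  | zero => simp [oja]
  | succ t ih =>
    rw [Finset.sum_range_succ]
    linarith [norm_oja_sq_add_le (η := η) (z := z) (v₀ := v₀) t]

theorem monotone_norm_oja (hη : 0 ≤ η) : Monotone fun i => ‖oja η z v₀ i‖ :=
  monotone_nat_of_le_succ fun i => le_of_sq_le_sq
    ((le_add_of_nonneg_right (by positivity)).trans (norm_oja_sq_add_le i)) (norm_nonneg _)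

theorem norm_oja_pos (hη : 0 ≤ η) (hv₀ : v₀ ≠ 0) (i : ℕ) : 0 < ‖oja η z v₀ i‖ :=
  (norm_pos_iff.2 hv₀).trans_le (monotone_norm_oja hη i.zero_le)

theorem ojaGain_nonneg (hη : 0 ≤ η) (i : ℕ) : 0 ≤ ojaGain η z v₀ i := by
  rw [ojaGain]
  positivity

theorem sum_ojaGain_nonneg (hη : 0 ≤ η) (s : Finset ℕ) : 0 ≤ ∑ i ∈ s, ojaGain η z v₀ i :=
  Finset.sum_nonneg fun i _ => ojaGain_nonneg hη i

theorem norm_sq_mul_ojaGain (i : ℕ) :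
    ‖oja η z v₀ i‖ ^ 2 * ojaGain η z v₀ i = η * ⟪z i, oja η z v₀ i⟫ ^ 2 := by
  rcases eq_or_ne (oja η z v₀ i) 0 with h | h
  · simp [h]
  · rw [ojaGain, mul_div_cancel₀ _ (by positivity)]

theorem ojaGain_le_mul_norm_sq (hη : 0 ≤ η) (i : ℕ) : ojaGain η z v₀ i ≤ η * ‖z i‖ ^ 2 := by
  refine div_le_of_le_mul₀ (by positivity) (by positivity) ?_
  rw [mul_assoc, ← mul_pow]
  gcongr η * ?_
  exact sq_le_sq' (neg_le_of_abs_le (abs_real_inner_le_norm _ _)) (real_inner_le_norm _ _)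

theorem mul_sum_inner_sq_le_norm_sq_mul_sum_ojaGain (hη : 0 ≤ η) (s t : ℕ) :
    η * ∑ i ∈ Finset.Ico s t, ⟪z i, oja η z v₀ i⟫ ^ 2 ≤
      ‖oja η z v₀ t‖ ^ 2 * ∑ i ∈ Finset.Ico s t, ojaGain η z v₀ i := by
  simp only [Finset.mul_sum, ← norm_sq_mul_ojaGain]
  gcongr with i hi
  · exact ojaGain_nonneg hη i
  · exact monotone_norm_oja hη (Finset.mem_Ico.1 hi).2.le

theorem ojaGain_le_mul_log_norm_sub (hη : 0 ≤ η) (hv₀ : v₀ ≠ 0) {c : ℝ} {i : ℕ}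
    (hz : η * ‖z i‖ ^ 2 ≤ c) :
    ojaGain η z v₀ i ≤
      (1 + 2 * c) * (Real.log ‖oja η z v₀ (i + 1)‖ - Real.log ‖oja η z v₀ i‖) := by
  set g := ojaGain η z v₀ i
  have hg : 0 ≤ g := ojaGain_nonneg hη i
  have hgc : g ≤ c := (ojaGain_le_mul_norm_sq hη i).trans hz
  have hpos : 0 < ‖oja η z v₀ i‖ := norm_oja_pos hη hv₀ i
  have hgrowth : ‖oja η z v₀ i‖ ^ 2 * (1 + 2 * g) ≤ ‖oja η z v₀ (i + 1)‖ ^ 2 := by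
    linarith [norm_oja_sq_add_le (η := η) (z := z) (v₀ := v₀) i,
      norm_sq_mul_ojaGain (η := η) (z := z) (v₀ := v₀) i]
  have hlog := Real.log_le_log (by positivity) hgrowth
  rw [Real.log_mul (by positivity) (by positivity), Real.log_pow, Real.log_pow] at hlog
  push_cast at hlog
  have hlog_lower : 2 * g / (1 + 2 * c) ≤ Real.log (1 + 2 * g) :=
    calc 2 * g / (1 + 2 * c) ≤ 2 * g / (1 + 2 * g) := by gcongr
      _ = 1 - (1 + 2 * g)⁻¹ := by field_simp; ring
      _ ≤ Real.log (1 + 2 * g) := Real.one_sub_inv_le_log_of_pos (by positivity)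
  rw [div_le_iff₀' (by linarith)] at hlog_lower
  have := mul_le_mul_of_nonneg_left hlog (by linarith : 0 ≤ 1 + 2 * c)
  linarith

theorem sum_ojaGain_le_mul_log_norm_sub (hη : 0 ≤ η) (hv₀ : v₀ ≠ 0) {c : ℝ}
    (hz : ∀ i < n, η * ‖z i‖ ^ 2 ≤ c) :
    ∑ i ∈ Finset.range n, ojaGain η z v₀ i ≤
      (1 + 2 * c) * (Real.log ‖oja η z v₀ n‖ - Real.log ‖v₀‖) := by
  have htelescope := Finset.sum_range_sub (fun i => Real.log ‖oja η z v₀ i‖) n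
  rw [oja] at htelescope
  rw [← htelescope, Finset.mul_sum]
  exact Finset.sum_le_sum fun i hi =>
    ojaGain_le_mul_log_norm_sub hη hv₀ (hz i (Finset.mem_range.1 hi))

section Projection

variable {K : Submodule ℝ E} [K.HasOrthogonalProjection]

theorem norm_starProjection_oja_sub_sq_le (hη : 0 ≤ η) (hα : 0 ≤ α)
    (hK : ∀ w ∈ K, η * ∑ i ∈ Finset.range n, ⟪w, z i⟫ ^ 2 ≤ α * ‖w‖ ^ 2)
    {s t : ℕ} (hst : s ≤ t) (ht : t ≤ n) :
    ‖K.starProjection (oja η z v₀ t - oja η z v₀ s)‖ ^ 2 ≤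
      α * (η * ∑ i ∈ Finset.Ico s t, ⟪z i, oja η z v₀ i⟫ ^ 2) := by
  set w := K.starProjection (oja η z v₀ t - oja η z v₀ s)
  set X := η * ∑ i ∈ Finset.Ico s t, ⟪z i, oja η z v₀ i⟫ ^ 2
  have hX : 0 ≤ X := by positivity
  have hwK : w ∈ K := Submodule.starProjection_apply_mem _ _
  have hnorm : ‖w‖ ^ 2 = η * ∑ i ∈ Finset.Ico s t, ⟪z i, oja η z v₀ i⟫ * ⟪w, z i⟫ := by
    rw [← inner_oja_sub_oja w hst]
    exact (K.re_inner_starProjection_eq_normSq _).symm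
  have henergy := mul_sum_Ico_sq_le_of_range hη (hK w hwK) ht s
  have hsq : ‖w‖ ^ 2 * ‖w‖ ^ 2 ≤ α * X * ‖w‖ ^ 2 :=
    calc ‖w‖ ^ 2 * ‖w‖ ^ 2
        = η ^ 2 * (∑ i ∈ Finset.Ico s t, ⟪z i, oja η z v₀ i⟫ * ⟪w, z i⟫) ^ 2 := by
          rw [← sq, hnorm, mul_pow]
      _ ≤ η ^ 2 * ((∑ i ∈ Finset.Ico s t, ⟪z i, oja η z v₀ i⟫ ^ 2) *
            ∑ i ∈ Finset.Ico s t, ⟪w, z i⟫ ^ 2) := by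
          gcongr
          exact Finset.sum_mul_sq_le_sq_mul_sq _ _ _
      _ = X * (η * ∑ i ∈ Finset.Ico s t, ⟪w, z i⟫ ^ 2) := by ring
      _ ≤ X * (α * ‖w‖ ^ 2) := mul_le_mul_of_nonneg_left henergy hX
      _ = α * X * ‖w‖ ^ 2 := by ring
  rcases (sq_nonneg ‖w‖).eq_or_lt with hzero | hpos
  · exact hzero ▸ mul_nonneg hα hX
  · exact le_of_mul_le_mul_right hsq hpos

theorem sum_inner_starProjection_oja_sub_sq_div_le (hη : 0 ≤ η) (hα : 0 ≤ α) (hv₀ : v₀ ≠ 0)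
    (hK : ∀ w ∈ K, η * ∑ i ∈ Finset.range n, ⟪w, z i⟫ ^ 2 ≤ α * ‖w‖ ^ 2)
    {s m t : ℕ} (hsm : s ≤ m) (hmt : m ≤ t) (ht : t ≤ n) :
    ∑ i ∈ Finset.Ico m t,
        η * ⟪K.starProjection (oja η z v₀ m - oja η z v₀ s), z i⟫ ^ 2 / ‖oja η z v₀ i‖ ^ 2 ≤
      α ^ 2 * ∑ i ∈ Finset.Ico s m, ojaGain η z v₀ i := by
  set w := K.starProjection (oja η z v₀ m - oja η z v₀ s)
  have hpos : 0 < ‖oja η z v₀ m‖ := norm_oja_pos hη hv₀ m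
  have hwK : w ∈ K := Submodule.starProjection_apply_mem _ _
  have hw : ‖w‖ ^ 2 ≤ α * (‖oja η z v₀ m‖ ^ 2 * ∑ i ∈ Finset.Ico s m, ojaGain η z v₀ i) :=
    (norm_starProjection_oja_sub_sq_le hη hα hK hsm (hmt.trans ht)).trans <|
      mul_le_mul_of_nonneg_left (mul_sum_inner_sq_le_norm_sq_mul_sum_ojaGain hη s m) hα
  calc ∑ i ∈ Finset.Ico m t, η * ⟪w, z i⟫ ^ 2 / ‖oja η z v₀ i‖ ^ 2
      ≤ ∑ i ∈ Finset.Ico m t, η * ⟪w, z i⟫ ^ 2 / ‖oja η z v₀ m‖ ^ 2 := by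
        gcongr with i hi
        exact monotone_norm_oja hη (Finset.mem_Ico.1 hi).1
    _ = (η * ∑ i ∈ Finset.Ico m t, ⟪w, z i⟫ ^ 2) / ‖oja η z v₀ m‖ ^ 2 := by
        rw [Finset.mul_sum, Finset.sum_div]
    _ ≤ α * ‖w‖ ^ 2 / ‖oja η z v₀ m‖ ^ 2 := by
        exact div_le_div_of_nonneg_right (mul_sum_Ico_sq_le_of_range hη (hK w hwK) ht m)
          (sq_nonneg _)
    _ ≤ α * (α * (‖oja η z v₀ m‖ ^ 2 * ∑ i ∈ Finset.Ico s m, ojaGain η z v₀ i)) /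
          ‖oja η z v₀ m‖ ^ 2 := by gcongr
    _ = α ^ 2 * ∑ i ∈ Finset.Ico s m, ojaGain η z v₀ i := by field_simp

theorem sum_ojaDrift_Ico_le_of_split (hη : 0 ≤ η) (hα : 0 ≤ α) (hv₀ : v₀ ≠ 0)
    (hK : ∀ w ∈ K, η * ∑ i ∈ Finset.range n, ⟪w, z i⟫ ^ 2 ≤ α * ‖w‖ ^ 2)
    {k : ℝ} (hk : 0 ≤ k) {s m t : ℕ} (hsm : s ≤ m) (hmt : m ≤ t) (ht : t ≤ n)
    (h : ∑ i ∈ Finset.Ico m t, ojaDrift η z v₀ K m i ≤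
      k ^ 2 * (α ^ 2 * ∑ i ∈ Finset.Ico m t, ojaGain η z v₀ i)) :
    ∑ i ∈ Finset.Ico m t, ojaDrift η z v₀ K s i ≤
      (k + 1) * (k * (α ^ 2 * ∑ i ∈ Finset.Ico m t, ojaGain η z v₀ i) +
        α ^ 2 * ∑ i ∈ Finset.Ico s m, ojaGain η z v₀ i) := by
  have hfar := sum_inner_starProjection_oja_sub_sq_div_le hη hα hv₀ hK hsm hmt ht
  simp only [ojaDrift, mul_div_right_comm η] at h hfar ⊢
  have hsplit (i : ℕ) : ⟪K.starProjection (oja η z v₀ i - oja η z v₀ s), z i⟫ =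
      ⟪K.starProjection (oja η z v₀ i - oja η z v₀ m), z i⟫ +
        ⟪K.starProjection (oja η z v₀ m - oja η z v₀ s), z i⟫ := by
    rw [← inner_add_left, ← map_add, sub_add_sub_cancel]
  simp only [hsplit]
  exact sum_mul_add_sq_le (fun i _ => by positivity) hk
    (mul_nonneg (sq_nonneg α) (sum_ojaGain_nonneg hη _)) h hfar

theorem sum_ojaDrift_le (hη : 0 ≤ η) (hα : 0 ≤ α) (hv₀ : v₀ ≠ 0)
    (hK : ∀ w ∈ K, η * ∑ i ∈ Finset.range n, ⟪w, z i⟫ ^ 2 ≤ α * ‖w‖ ^ 2)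
    (k : ℕ) {s t : ℕ} (hst : s ≤ t) (htk : t ≤ s + 2 ^ k) (ht : t ≤ n) :
    ∑ i ∈ Finset.Ico s t, ojaDrift η z v₀ K s i ≤
      (k : ℝ) ^ 2 * (α ^ 2 * ∑ i ∈ Finset.Ico s t, ojaGain η z v₀ i) := by
  induction k generalizing s t with
  | zero =>
    have hdrift : ∀ i ∈ Finset.Ico s t, ojaDrift η z v₀ K s i = 0 := fun i hi => by
      obtain rfl : i = s := by grind
      simp [ojaDrift]
    simp [Finset.sum_eq_zero hdrift]
  | succ k ih =>
    obtain ⟨m, hsm, hmt, hmk, htm⟩ : ∃ m, s ≤ m ∧ m ≤ t ∧ m ≤ s + 2 ^ k ∧ t ≤ m + 2 ^ k :=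
      ⟨min (s + 2 ^ k) t, by grind⟩
    have hleft := ih hsm hmk (hmt.trans ht)
    have hright := sum_ojaDrift_Ico_le_of_split hη hα hv₀ hK k.cast_nonneg hsm hmt ht
      (ih hmt htm ht)
    rw [← Finset.sum_Ico_consecutive _ hsm hmt, ← Finset.sum_Ico_consecutive _ hsm hmt]
    have hgain_left := mul_nonneg (sq_nonneg α)
      (sum_ojaGain_nonneg (z := z) (v₀ := v₀) hη (Finset.Ico s m))
    have hgain_right := mul_nonneg (sq_nonneg α)
      (sum_ojaGain_nonneg (z := z) (v₀ := v₀) hη (Finset.Ico m t))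
    have hk : (0 : ℝ) ≤ k := k.cast_nonneg
    push_cast
    linarith [mul_nonneg hk hgain_left, mul_nonneg hk hgain_right]

theorem norm_starProjection_oja_sub_sq_le_half (hη : 0 ≤ η) (hα : 0 ≤ α)
    (hK : ∀ w ∈ K, η * ∑ i ∈ Finset.range n, ⟪w, z i⟫ ^ 2 ≤ α * ‖w‖ ^ 2) {t : ℕ} (ht : t ≤ n) :
    ‖K.starProjection (oja η z v₀ t - v₀)‖ ^ 2 ≤ α / 2 * ‖oja η z v₀ t‖ ^ 2 := by
  have hproj := norm_starProjection_oja_sub_sq_le (v₀ := v₀) hη hα hK t.zero_le ht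
  rw [← Finset.range_eq_Ico, oja.eq_1] at hproj
  refine hproj.trans ?_
  rw [div_mul_eq_mul_div, mul_div_assoc]
  gcongr
  linarith [norm_sq_add_two_mul_sum_le_norm_oja_sq (η := η) (z := z) (v₀ := v₀) t,
    sq_nonneg ‖v₀‖]

end Projection

variable {u : E}

theorem one_sub_half_mul_norm_oja_sq_le (hη : 0 ≤ η) (hα : 0 ≤ α) (hu : ‖u‖ = 1)
    (hK : ∀ w ∈ (ℝ ∙ u)ᗮ, η * ∑ i ∈ Finset.range n, ⟪w, z i⟫ ^ 2 ≤ α * ‖w‖ ^ 2)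
    {t : ℕ} (ht : t ≤ n) :
    (1 - α / 2) * ‖oja η z u t‖ ^ 2 ≤ ⟪u, oja η z u t⟫ ^ 2 := by
  have hproj := norm_starProjection_oja_sub_sq_le_half (v₀ := u) hη hα hK ht
  rw [starProjection_orthogonal_singleton_sub_self hu, norm_sub_sq_real, real_inner_smul_right,
    norm_smul, hu, real_inner_comm u, Real.norm_eq_abs, mul_one, sq_abs] at hproj
  linarith

theorem one_sub_half_mul_inner_sq_le_ojaGain_add_ojaDrift (hη : 0 ≤ η) (hα : 0 ≤ α)
    (hu : ‖u‖ = 1)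
    (hK : ∀ w ∈ (ℝ ∙ u)ᗮ, η * ∑ i ∈ Finset.range n, ⟪w, z i⟫ ^ 2 ≤ α * ‖w‖ ^ 2)
    {i : ℕ} (hi : i ≤ n) :
    (1 - α / 2) * (η * ⟪u, z i⟫ ^ 2) ≤
      2 * (ojaGain η z u i + ojaDrift η z u (ℝ ∙ u)ᗮ 0 i) := by
  set v := oja η z u i
  set b := ⟪v - ⟪u, v⟫ • u, z i⟫ with hb
  have hpos : 0 < ‖v‖ := norm_oja_pos hη (norm_ne_zero_iff.1 (by simp [hu])) i
  have hdrift : ojaDrift η z u (ℝ ∙ u)ᗮ 0 i = η * b ^ 2 / ‖v‖ ^ 2 := by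
    rw [ojaDrift, oja.eq_1, starProjection_orthogonal_singleton_sub_self hu]
  have hinner : ⟪z i, v⟫ = ⟪u, v⟫ * ⟪u, z i⟫ + b := by
    rw [hb, inner_sub_left, real_inner_smul_left, real_inner_comm]
    ring
  have hoverlap : (1 - α / 2) * ‖v‖ ^ 2 * ⟪u, z i⟫ ^ 2 ≤ 2 * (⟪z i, v⟫ ^ 2 + b ^ 2) :=
    calc (1 - α / 2) * ‖v‖ ^ 2 * ⟪u, z i⟫ ^ 2
        ≤ ⟪u, v⟫ ^ 2 * ⟪u, z i⟫ ^ 2 := by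
          gcongr
          exact one_sub_half_mul_norm_oja_sq_le hη hα hu hK hi
      _ = (⟪z i, v⟫ - b) ^ 2 := by rw [hinner]; ring
      _ ≤ 2 * (⟪z i, v⟫ ^ 2 + b ^ 2) := by linarith [sq_nonneg (⟪z i, v⟫ + b)]
  calc (1 - α / 2) * (η * ⟪u, z i⟫ ^ 2)
      = η * ((1 - α / 2) * ‖v‖ ^ 2 * ⟪u, z i⟫ ^ 2) / ‖v‖ ^ 2 := by field_simp
    _ ≤ η * (2 * (⟪z i, v⟫ ^ 2 + b ^ 2)) / ‖v‖ ^ 2 := by gcongr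
    _ = 2 * (ojaGain η z u i + ojaDrift η z u (ℝ ∙ u)ᗮ 0 i) := by
        rw [hdrift, ojaGain]
        ring

theorem one_sub_half_mul_sum_inner_sq_le_sum_ojaGain (hη : 0 ≤ η) (hα : 0 ≤ α) (hu : ‖u‖ = 1)
    (hK : ∀ w ∈ (ℝ ∙ u)ᗮ, η * ∑ i ∈ Finset.range n, ⟪w, z i⟫ ^ 2 ≤ α * ‖w‖ ^ 2)
    {L : ℕ} (hn : n ≤ 2 ^ L) :
    (1 - α / 2) * (η * ∑ i ∈ Finset.range n, ⟪u, z i⟫ ^ 2) ≤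
      2 * (1 + α ^ 2 * (L : ℝ) ^ 2) * ∑ i ∈ Finset.range n, ojaGain η z u i := by
  have hu0 : u ≠ 0 := norm_ne_zero_iff.1 (by simp [hu])
  have hdrift := sum_ojaDrift_le hη hα hu0 hK L n.zero_le (by simpa using hn) le_rfl
  rw [← Finset.range_eq_Ico] at hdrift
  calc (1 - α / 2) * (η * ∑ i ∈ Finset.range n, ⟪u, z i⟫ ^ 2)
      ≤ 2 * (∑ i ∈ Finset.range n, ojaGain η z u i +
          ∑ i ∈ Finset.range n, ojaDrift η z u (ℝ ∙ u)ᗮ 0 i) := by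
        rw [← Finset.sum_add_distrib, Finset.mul_sum, Finset.mul_sum, Finset.mul_sum]
        exact Finset.sum_le_sum fun i hi =>
          one_sub_half_mul_inner_sq_le_ojaGain_add_ojaDrift hη hα hu hK (Finset.mem_range.1 hi).le
    _ ≤ 2 * (1 + α ^ 2 * (L : ℝ) ^ 2) * ∑ i ∈ Finset.range n, ojaGain η z u i := by
        linarith

theorem div_eight_div_le_log_norm_oja (hη : 0 ≤ η) (hα : 0 ≤ α) (hα1 : α ≤ 1) (hu : ‖u‖ = 1)
    (hz : ∀ i < n, η * ‖z i‖ ^ 2 ≤ 1 / 2)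
    (hK : ∀ w ∈ (ℝ ∙ u)ᗮ, η * ∑ i ∈ Finset.range n, ⟪w, z i⟫ ^ 2 ≤ α * ‖w‖ ^ 2)
    {L : ℕ} (hn : n ≤ 2 ^ L) :
    (η * ∑ i ∈ Finset.range n, ⟪u, z i⟫ ^ 2) / 8 / (1 + α ^ 2 * (L : ℝ) ^ 2) ≤
      Real.log ‖oja η z u n‖ := by
  have hu0 : u ≠ 0 := norm_ne_zero_iff.1 (by simp [hu])
  have hlog := sum_ojaGain_le_mul_log_norm_sub hη hu0 hz
  rw [hu, Real.log_one, sub_zero] at hlog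
  have henergy := one_sub_half_mul_sum_inner_sq_le_sum_ojaGain hη hα hu hK hn
  set β := η * ∑ i ∈ Finset.range n, ⟪u, z i⟫ ^ 2
  have hβ : 0 ≤ β := by positivity
  rw [div_le_iff₀ (by positivity)]
  have hhalf : 1 / 2 * β ≤ (1 - α / 2) * β := mul_le_mul_of_nonneg_right (by linarith) hβ
  have := mul_le_mul_of_nonneg_left hlog
    (by positivity : 0 ≤ 2 * (1 + α ^ 2 * (L : ℝ) ^ 2))
  linarith

end Oja

theorem stmt_14_general {E : Type*} [NormedAddCommGroup E] [InnerProductSpace ℝ E] {n L : ℕ}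
    (hn : n ≤ 2 ^ L) {C₁ : ℝ} (hC₁ : 1 ≤ C₁) {y : ℕ → E} {η : ℝ} (hη : 0 ≤ η)
    (hη' : ∀ i ∈ Finset.Icc 1 n, η * ‖y i‖ ^ 2 ≤ 1 / 2) {vstar : E} (hvstar : ‖vstar‖ = 1)
    {α β : ℝ} (hα : α ≤ 1) (hbeta : η * ∑ i ∈ Finset.Icc 1 n, ⟪vstar, y i⟫ ^ 2 = β)
    (halpha : ∀ w : E, ‖w‖ ≤ 1 → ⟪w, vstar⟫ = 0 →
      η * ∑ i ∈ Finset.Icc 1 n, ⟪w, y i⟫ ^ 2 ≤ α)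
    {v : ℕ → E} (hv0 : v 0 = vstar)
    (hv : ∀ i, 1 ≤ i → i ≤ n → v i = v (i - 1) + (η * ⟪y i, v (i - 1)⟫) • y i) :
    (β / 8) / (1 + C₁ * α ^ 2 * (L : ℝ) ^ 2) ≤ Real.log ‖v n‖ ∧
      (C₁ * α * L ≤ 1 → Real.exp (β / 16) ≤ ‖v n‖) := by
  have hα0 : 0 ≤ α := by simpa using halpha 0 (by simp) (by simp)
  have hβ : 0 ≤ β := hbeta ▸ by positivity
  have hshift (f : ℕ → ℝ) : ∑ i ∈ Finset.Icc 1 n, f i = ∑ i ∈ Finset.range n, f (i + 1) := by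
    rw [Finset.range_eq_Ico, Finset.sum_Ico_add' f 0 n 1]
    rfl
  simp only [hshift] at hbeta halpha
  have hvn : v n = oja η (fun i => y (i + 1)) vstar n :=
    eq_oja_of_recurrence hv0 fun i hi => hv (i + 1) (by lia) hi
  have hlog : β / 8 / (1 + α ^ 2 * (L : ℝ) ^ 2) ≤ Real.log ‖v n‖ := by
    rw [hvn, ← hbeta]
    refine div_eight_div_le_log_norm_oja hη hα0 hα hvstar
      (fun i hi => hη' (i + 1) (by grind)) (fun w hw => ?_) hn
    exact mul_sum_inner_sq_le_mul_norm_sq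
      (fun x hx hx1 => halpha x hx1 (Submodule.mem_orthogonal_singleton_iff_inner_left.1 hx)) hw
  refine ⟨le_trans ?_ hlog, fun hsmall => ?_⟩
  · gcongr
    exact le_mul_of_one_le_left (sq_nonneg α) hC₁
  · have hαL : α * L ≤ 1 := by
      refine le_trans ?_ hsmall
      gcongr
      exact le_mul_of_one_le_left hα0 hC₁
    have hvpos : 0 < ‖v n‖ := hvn ▸ norm_oja_pos hη (norm_ne_zero_iff.1 (by simp [hvstar])) n
    rw [← Real.le_log_iff_exp_le hvpos]
    refine le_trans ?_ hlog
    rw [div_div]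
    gcongr
    linarith [pow_le_one₀ (n := 2) (by positivity) hαL, mul_pow α (L : ℝ) 2]

theorem stmt_14 {n d L : ℕ} (hd : 1 ≤ d) (hL : 1 ≤ L) (hn : n = 2 ^ L)
    (C₁ : ℝ) (hC₁ : 200 ≤ C₁)
    (y : ℕ → EuclideanSpace ℝ (Fin d)) (η : ℝ) (hη : 0 < η)
    (hη' : η ≤ 0.1 / ((Finset.Icc 1 n).sup'
      (Finset.nonempty_Icc.mpr (by rw [hn]; exact Nat.one_le_two_pow : 1 ≤ n))
      fun i => ‖y i‖ ^ 2))
    (vstar : EuclideanSpace ℝ (Fin d)) (hvstar : ‖vstar‖ = 1)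
    (α β : ℝ) (hα : α ∈ Set.Ioo (0 : ℝ) 0.1) (hαβ : α ≤ β)
    (hbeta : η * ∑ i ∈ Finset.Icc 1 n, ⟪vstar, y i⟫ ^ 2 = β)
    (halpha : ∀ w : EuclideanSpace ℝ (Fin d), ‖w‖ ≤ 1 → ⟪w, vstar⟫ = 0 →
      η * ∑ i ∈ Finset.Icc 1 n, ⟪w, y i⟫ ^ 2 ≤ α)
    (v : ℕ → EuclideanSpace ℝ (Fin d)) (hv0 : v 0 = vstar)
    (hv : ∀ i, 1 ≤ i → i ≤ n → v i = v (i - 1) + (η * ⟪y i, v (i - 1)⟫) • y i) :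
    (β / 8) / (1 + C₁ * α ^ 2 * (L : ℝ) ^ 2) ≤ Real.log ‖v n‖ ∧
      (α < 1 / (10 * C₁ * (L : ℝ)) → Real.exp (β / 20) ≤ ‖v n‖) := by
  have hbound : ∀ i ∈ Finset.Icc 1 n, η * ‖y i‖ ^ 2 ≤ 1 / 2 := fun i hi =>
    (mul_le_of_le_div_sup' _ hη (fun _ _ => by positivity) hη' hi).trans (by norm_num)
  have h := stmt_14_general hn.le (by linarith : 1 ≤ C₁) hη.le hbound hvstar
    (hα.2.le.trans (by norm_num)) hbeta halpha hv0 hv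
  refine ⟨h.1, fun hsmall => (Real.exp_le_exp.2 (by linarith [hα.1])).trans (h.2 ?_)⟩
  rw [lt_div_iff₀ (by positivity)] at hsmall
  linarith
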